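/- Let F ⊆ ℤ² be a cluster, T an F-tiling, and α an integer with gcd(α, |F|) = 1. Then T is also an (αF)-tiling, where αF = {α·a : a ∈ F}. -/

import Mathlib

/-!
For a family `v` of translation vectors indexed by a finite set `s`, let `N x` be the number of
`i ∈ s` with `x - v i ∈ T`, so that tiling means `N = 1` everywhere. Counting with indices lets
vectors be repeated, so dilating `v` needs no injectivity argument.

Suppose `v` tiles and let `N'` be the counting function of another family `w` over `s`. Exchanging
two sums gives `∑ j ∈ s, N' (x - v j) = |s|` for every `x`, so `N'` is identically `1` as soon as
`N' ≥ 1` everywhere or `N' ≤ 1` everywhere (`hits_eq_one_of_le`, `hits_eq_one_of_ge`).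

* For `w = -v` the bound `N' ≤ 1` holds, because `T - T` and `F - F` meet only in `0`, a condition
  symmetric under `F ↦ -F`.
* For `w = p • v` with `p` a prime not dividing `|s|`, let `f = ∑ X ^ v i` act on functions
  `G → ZMod p` by translation. Then `f * 1_T = 1`, so `f ^ p * 1_T = |s| ^ (p - 1) = 1`, while
  Frobenius gives `f ^ p = ∑ X ^ (p • v i)`. Hence `N' ≡ 1 (mod p)` and `N' ≥ 1`.

A nonzero `α` is a product of primes and a sign; `α = 0` forces `|s| = 1`, hence `T = G`.
-/

/-- `T` is a tiling of `ℤ²` by translates of the cluster `F`. -/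
def IsTiling (F : Finset (ℤ × ℤ)) (T : Set (ℤ × ℤ)) : Prop :=
  ∀ p : ℤ × ℤ, ∃! tv : (ℤ × ℤ) × (ℤ × ℤ), tv.1 ∈ T ∧ tv.2 ∈ F ∧ p = tv.1 + tv.2

section Hits

variable {ι G : Type*} [AddCommGroup G]

open Classical in
/-- The number of indices `i ∈ s` for which `x` lies in the translate `T + v i`; repeated vectors
are counted with multiplicity. -/
noncomputable def hits (s : Finset ι) (T : Set G) (v : ι → G) (x : G) : ℕ :=
  (s.filter fun i => x - v i ∈ T).card

theorem sum_hits (s : Finset ι) (T : Set G) (v w : ι → G) (hv : ∀ x, hits s T v x = 1) (x : G) :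
    ∑ j ∈ s, hits s T w (x - v j) = s.card := by
  classical
  have key : ∀ i ∈ s, ∑ j ∈ s, (if x - v j - w i ∈ T then 1 else 0) = 1 := by
    intro i _
    have h := hv (x - w i)
    simp only [hits, Finset.card_filter] at h
    simpa only [sub_right_comm] using h
  simp only [hits, Finset.card_filter]
  rw [Finset.sum_comm, Finset.sum_congr rfl key]
  simp

theorem nonempty_of_hits {s : Finset ι} {T : Set G} {v : ι → G} (hv : ∀ x, hits s T v x = 1) :
    s.Nonempty := by
  rw [Finset.nonempty_iff_ne_empty]
  rintro rfl
  simpa [hits] using hv 0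

theorem hits_eq_one_of_le {s : Finset ι} {T : Set G} {v w : ι → G}
    (hv : ∀ x, hits s T v x = 1) (hw : ∀ x, hits s T w x ≤ 1) (x : G) : hits s T w x = 1 := by
  obtain ⟨j, hj⟩ := nonempty_of_hits hv
  have h := sum_hits s T v w hv (x + v j)
  rw [Finset.card_eq_sum_ones, Finset.sum_eq_sum_iff_of_le fun i _ => hw _] at h
  simpa using h j hj

theorem hits_eq_one_of_ge {s : Finset ι} {T : Set G} {v w : ι → G}
    (hv : ∀ x, hits s T v x = 1) (hw : ∀ x, 1 ≤ hits s T w x) (x : G) : hits s T w x = 1 := by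
  obtain ⟨j, hj⟩ := nonempty_of_hits hv
  have h := (sum_hits s T v w hv (x + v j)).symm
  rw [Finset.card_eq_sum_ones, Finset.sum_eq_sum_iff_of_le fun i _ => hw _] at h
  simpa using (h j hj).symm

theorem hits_neg {s : Finset ι} {T : Set G} {v : ι → G} (hv : ∀ x, hits s T v x = 1) (x : G) :
    hits s T (-v) x = 1 := by
  classical
  refine hits_eq_one_of_le hv (fun x => Finset.card_le_one.2 fun i hi j hj => ?_) x
  -- The point `x + v i + v j` lies in both `T + v i` and `T + v j`.
  refine Finset.card_le_one.1 (hv (x + v i + v j)).le i ?_ j ?_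
  · simp only [Finset.mem_filter, Pi.neg_apply, sub_neg_eq_add] at hi hj ⊢
    exact ⟨hi.1, by convert hj.2 using 1; abel⟩
  · simp only [Finset.mem_filter, Pi.neg_apply, sub_neg_eq_add] at hi hj ⊢
    exact ⟨hj.1, by convert hi.2 using 1; abel⟩

/-- The group algebra of `G` acting on functions `G → R`, the group element `g` acting as the
translation `φ ↦ φ (· - g)`. -/
noncomputable def translationAction (R G : Type*) [CommRing R] [AddCommGroup G] :
    AddMonoidAlgebra R G →ₐ[R] Module.End R (G → R) :=
  AddMonoidAlgebra.lift R (Module.End R (G → R)) G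
    { toFun := fun g => LinearMap.funLeft R R fun x => x - g.toAdd
      map_one' := by ext; simp [LinearMap.funLeft]
      map_mul' := fun a b => by
        refine LinearMap.ext fun φ => funext fun x => ?_
        simp [LinearMap.funLeft_apply, sub_sub] }

theorem translationAction_sum {R : Type*} [CommRing R] (s : Finset ι) (v : ι → G) (φ : G → R)
    (x : G) :
    translationAction R G (∑ i ∈ s, AddMonoidAlgebra.single (v i) 1) φ x =
      ∑ i ∈ s, φ (x - v i) := by
  simp [translationAction, map_sum, LinearMap.sum_apply, Finset.sum_apply,
    LinearMap.funLeft_apply]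

theorem hits_prime {s : Finset ι} {T : Set G} {v : ι → G} (hv : ∀ x, hits s T v x = 1)
    {p : ℕ} (hp : p.Prime) (hps : p.Coprime s.card) (x : G) :
    hits s T (p • v) x = 1 := by
  classical
  have : Fact p.Prime := ⟨hp⟩
  set τ : G → ZMod p := fun y => if y ∈ T then 1 else 0 with hτ
  have hcast : ∀ (w : ι → G) y, (hits s T w y : ZMod p) = ∑ i ∈ s, τ (y - w i) := by
    intro w y
    simp [hits, hτ]
  set f : AddMonoidAlgebra (ZMod p) G := ∑ i ∈ s, AddMonoidAlgebra.single (v i) 1 with hf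
  have hpow : ∀ n : ℕ, translationAction (ZMod p) G (f ^ (n + 1)) τ =
      fun _ => (s.card : ZMod p) ^ n := by
    intro n
    induction n with
    | zero =>
      funext y
      rw [zero_add, pow_one, hf, translationAction_sum, ← hcast, hv]
      simp
    | succ n ih =>
      rw [pow_succ', map_mul, Module.End.mul_apply, ih]
      funext y
      rw [hf, translationAction_sum]
      simp [pow_succ']
  have hfrob : f ^ p = ∑ i ∈ s, AddMonoidAlgebra.single ((p • v) i) 1 := by
    have : CharP (AddMonoidAlgebra (ZMod p) G) p := charP_of_injective_algebraMap
      (FaithfulSMul.algebraMap_injective (ZMod p) (AddMonoidAlgebra (ZMod p) G)) p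
    rw [hf, sum_pow_char]
    simp [AddMonoidAlgebra.single_pow]
  have hne : (s.card : ZMod p) ≠ 0 := by
    rw [Ne, ZMod.natCast_eq_zero_iff]
    exact (hp.coprime_iff_not_dvd).1 hps
  refine hits_eq_one_of_ge hv (fun y => Nat.one_le_iff_ne_zero.2 fun h0 => ?_) x
  have h1 := congrFun (hpow (p - 1)) y
  rw [Nat.sub_add_cancel hp.one_le, hfrob, translationAction_sum, ← hcast, h0,
    ZMod.pow_card_sub_one_eq_one hne] at h1
  simp at h1

theorem hits_natCast {s : Finset ι} {T : Set G} {v : ι → G} (hv : ∀ x, hits s T v x = 1)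
    (n : ℕ) (hn : n.Coprime s.card) : ∀ x, hits s T (n • v) x = 1 := by
  classical
  induction n using induction_on_primes with
  | zero =>
    -- Here `s` is a singleton and `T` is the whole group.
    rw [Nat.coprime_zero_left] at hn
    obtain ⟨i, rfl⟩ := Finset.card_eq_one.1 hn
    intro x
    have h := hv (x + v i)
    simpa [hits, Finset.filter_singleton] using h
  | one => simpa using hv
  | prime_mul p a hp ih =>
    intro x
    rw [mul_smul]
    exact hits_prime (ih (Nat.Coprime.coprime_mul_left hn)) hp
      (Nat.Coprime.coprime_mul_right hn) x

theorem hits_intCast {s : Finset ι} {T : Set G} {v : ι → G} (hv : ∀ x, hits s T v x = 1)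
    (α : ℤ) (hα : Int.gcd α s.card = 1) (x : G) : hits s T (α • v) x = 1 := by
  have h := hits_natCast hv α.natAbs (by simpa [Int.gcd] using hα)
  rcases Int.natAbs_eq α with h' | h'
  · rw [h', natCast_zsmul]
    exact h x
  · rw [h', neg_smul, natCast_zsmul]
    exact hits_neg h x

end Hits

theorem isTiling_iff_hits (F : Finset (ℤ × ℤ)) (T : Set (ℤ × ℤ)) :
    IsTiling F T ↔ ∀ x, hits F T id x = 1 := by
  classical
  refine forall_congr' fun x => ?_
  rw [hits, Finset.card_eq_one]
  constructor
  · rintro ⟨⟨t, a⟩, ⟨ht, ha, rfl⟩, hu⟩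
    refine ⟨a, Finset.ext fun b => ?_⟩
    simp only [Finset.mem_filter, id, Finset.mem_singleton]
    constructor
    · rintro ⟨hb, hbT⟩
      exact congrArg Prod.snd (hu (t + a - b, b) ⟨hbT, hb, by simp⟩)
    · rintro rfl
      exact ⟨ha, by simpa using ht⟩
  · rintro ⟨a, h⟩
    have hmem : ∀ b, (b ∈ F ∧ x - b ∈ T) ↔ b = a := fun b => by
      simpa using Finset.ext_iff.1 h b
    obtain ⟨ha, haT⟩ := (hmem a).2 rfl
    refine ⟨(x - a, a), ⟨haT, ha, by simp⟩, ?_⟩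
    rintro ⟨t, b⟩ ⟨ht, hb, rfl⟩
    obtain rfl := (hmem b).1 ⟨hb, by simpa using ht⟩
    simp

/-- Counting over the image of a family forgets multiplicities, which is harmless when every point
is hit exactly once. -/
theorem hits_image {F : Finset (ℤ × ℤ)} {T : Set (ℤ × ℤ)} {w : ℤ × ℤ → ℤ × ℤ} {x : ℤ × ℤ}
    (h : hits F T w x = 1) : hits (F.image w) T id x = 1 := by
  classical
  rw [hits, Finset.card_eq_one] at h ⊢
  obtain ⟨a, h⟩ := h
  refine ⟨w a, ?_⟩
  rw [Finset.filter_image]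
  simp only [id]
  rw [h, Finset.image_singleton]

/-- **Dilation Lemma.** If `T` is an `F`-tiling and `α` is an integer
coprime to `|F|`, then `T` is also an `αF`-tiling. -/
theorem stmt19 (F : Finset (ℤ × ℤ)) (hF : F.Nonempty) (T : Set (ℤ × ℤ))
    (hT : IsTiling F T) (α : ℤ) (hα : Int.gcd α (F.card : ℤ) = 1) :
    IsTiling (F.image fun a => (α * a.1, α * a.2)) T := by
  rw [isTiling_iff_hits] at hT ⊢
  exact fun x => hits_image (hits_intCast hT α hα x)
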